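/- Let d ≥ 2 and m ≥ 1 be integers, let x₁,…,x_d be positive real numbers with e₁ = x₁+⋯+x_d, and let q(τ) = ∏_{i=1}^d (τ + x_i). Then for every integer K with 2 ≤ K ≤ md, ∫₀^∞ τ^{md−K} / q(τ)^m dτ ≥ (d/e₁)^{K−1} · (md−K)! (K−2)! / (md−1)! > 0. (This gives the strictly positive lower bound, alternating in sign, for all m-th order mixed partial derivatives of the entropy with respect to the elementary symmetric polynomials, since (−1)^{m−1} ∂^m H/∂e_{i₁}⋯∂e_{i_m} = (m−1)! ∫₀^∞ τ^{md−K}/q(τ)^m dτ with K = i₁+⋯+i_m.) -/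

import Mathlib

open MeasureTheory Real

lemma aux_base (s : ℝ) (hs : 0 < s) (b : ℕ) :
    IntegrableOn (fun t : ℝ => 1 / (t + s) ^ (b + 2)) (Set.Ioi 0) ∧
    ∫ t in Set.Ioi (0 : ℝ), 1 / (t + s) ^ (b + 2) = 1 / ((b + 1) * s ^ (b + 1)) := by
  have hder : ∀ t ∈ Set.Ici (0 : ℝ),
      HasDerivAt (fun t : ℝ => -(1 / (b + 1)) * ((t + s) ^ (b + 1))⁻¹) (1 / (t + s) ^ (b + 2)) t := by
    intro t ht
    have ht0 : (0 : ℝ) ≤ t := ht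
    have hp : 0 < t + s := by linarith
    have h1 : HasDerivAt (fun t : ℝ => (t + s) ^ (b + 1)) _ t :=
      ((hasDerivAt_id t).add_const s).pow (b + 1)
    have h2 := (h1.inv (by positivity)).const_mul (-(1 / ((b : ℝ) + 1)))
    refine h2.congr_deriv ?_
    simp
    field_simp
    ring
  have hlim : Filter.Tendsto (fun t : ℝ => -(1 / ((b : ℝ) + 1)) * ((t + s) ^ (b + 1))⁻¹)
      Filter.atTop (nhds 0) := by
    have h1 : Filter.Tendsto (fun t : ℝ => (t + s) ^ (b + 1)) Filter.atTop Filter.atTop :=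
      (Filter.tendsto_pow_atTop (by omega)).comp
        (Filter.tendsto_atTop_add_const_right _ s Filter.tendsto_id)
    simpa using h1.inv_tendsto_atTop.const_mul (-(1 / ((b : ℝ) + 1)))
  have hpos : ∀ t ∈ Set.Ioi (0 : ℝ), 0 ≤ 1 / (t + s) ^ (b + 2) := by
    intro t ht
    have ht0 : (0 : ℝ) < t := ht
    positivity
  refine ⟨integrableOn_Ioi_deriv_of_nonneg' hder hpos hlim, ?_⟩
  rw [integral_Ioi_of_hasDerivAt_of_nonneg' hder hpos hlim]
  simp
  ring

lemma aux_integrable (s : ℝ) (hs : 0 < s) (a b : ℕ) :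
    IntegrableOn (fun t : ℝ => t ^ a / (t + s) ^ (a + b + 2)) (Set.Ioi 0) := by
  refine Integrable.mono' (aux_base s hs b).1 ?_ ?_
  · exact (by fun_prop : Measurable (fun t : ℝ => t ^ a / (t + s) ^ (a + b + 2))).aestronglyMeasurable
  · refine (ae_restrict_mem measurableSet_Ioi).mono ?_
    intro t ht
    have ht0 : (0 : ℝ) < t := ht
    rw [Real.norm_of_nonneg (by positivity), div_le_div_iff₀ (by positivity) (by positivity),
      add_assoc, pow_add (t + s) a, one_mul]
    have : t ^ a ≤ (t + s) ^ a := by gcongr; linarith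
    gcongr

lemma aux_value (s : ℝ) (hs : 0 < s) (a b : ℕ) :
    ∫ t in Set.Ioi (0 : ℝ), t ^ a / (t + s) ^ (a + b + 2) =
      (a.factorial * b.factorial : ℝ) / ((a + b + 1).factorial * s ^ (b + 1)) := by
  induction a with
  | zero =>
    have := (aux_base s hs b).2
    simp only [pow_zero, zero_add, this, Nat.factorial_succ b]
    push_cast
    have : (b.factorial : ℝ) ≠ 0 := by positivity
    simp
    field_simp
  | succ a ih =>
    have hI0 := aux_integrable s hs a b
    have hI1 := aux_integrable s hs (a + 1) b
    have hder : ∀ t ∈ Set.Ici (0 : ℝ),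
        HasDerivAt (fun t : ℝ => t ^ (a + 1) / (t + s) ^ (a + b + 2))
          ((a + 1) * (t ^ a / (t + s) ^ (a + b + 2)) -
            (a + b + 2) * (t ^ (a + 1) / (t + s) ^ (a + 1 + b + 2))) t := by
      intro t ht
      have ht0 : (0 : ℝ) ≤ t := ht
      have hp : 0 < t + s := by linarith
      have h1 : HasDerivAt (fun t : ℝ => (t + s) ^ (a + b + 2)) _ t :=
        ((hasDerivAt_id t).add_const s).pow (a + b + 2)
      have h2 := (hasDerivAt_pow (a + 1) t).div h1 (by positivity)
      refine h2.congr_deriv ?_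
      simp only [id, Nat.add_sub_cancel, mul_one]
      have e1 : a + b + 2 - 1 = a + b + 1 := by omega
      have e2 : a + 1 + b + 2 = a + b + 1 + 2 := by omega
      have e3 : a + b + 2 = a + b + 1 + 1 := by omega
      rw [e1, e2, e3]
      push_cast
      rw [pow_succ (t + s) (a + b + 1), pow_add (t + s) (a + b + 1) 2]
      generalize hu : (t + s) ^ (a + b + 1) = u
      have hu0 : 0 < u := by rw [← hu]; positivity
      field_simp
      ring
    have hlim : Filter.Tendsto (fun t : ℝ => t ^ (a + 1) / (t + s) ^ (a + b + 2))
        Filter.atTop (nhds 0) := by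
      have h1 : Filter.Tendsto (fun t : ℝ => (t + s)) Filter.atTop Filter.atTop :=
        (Filter.tendsto_atTop_add_const_right _ s Filter.tendsto_id)
      have h2 : Filter.Tendsto (fun t : ℝ => (t + s) ^ (b + 1)) Filter.atTop Filter.atTop :=
        (Filter.tendsto_pow_atTop (by omega)).comp h1
      refine squeeze_zero' ?_ ?_ h2.inv_tendsto_atTop
      · filter_upwards [Filter.eventually_gt_atTop 0] with t ht
        positivity
      · filter_upwards [Filter.eventually_gt_atTop 0] with t ht
        have e3 : a + b + 2 = (a + 1) + (b + 1) := by omega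
        have : t ^ (a + 1) ≤ (t + s) ^ (a + 1) := by gcongr; linarith
        simp only [Pi.inv_apply]
        rw [e3, pow_add (t + s), div_le_iff₀ (by positivity)]
        field_simp
        exact this
    have hint := integral_Ioi_of_hasDerivAt_of_tendsto' hder
      ((hI0.const_mul _).sub (hI1.const_mul _)) hlim
    rw [integral_sub (hI0.const_mul _) (hI1.const_mul _), integral_const_mul, integral_const_mul,
      ih] at hint
    have e2 : a + 1 + b + 1 = (a + b + 1) + 1 := by omega
    rw [e2, Nat.factorial_succ a, Nat.factorial_succ (a + b + 1)]
    push_cast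
    have hc : (a : ℝ) + b + 2 ≠ 0 := by positivity
    have hf : ((a + b + 1).factorial : ℝ) ≠ 0 := by positivity
    apply mul_left_cancel₀ hc
    simp at hint
    have e : (a : ℝ) + b + 1 + 1 = a + b + 2 := by ring
    rw [e, ← sub_eq_zero.mp hint]
    field_simp

lemma aux_amgm (d : ℕ) (hd : 0 < d) (z : Fin d → ℝ) (hz : ∀ i, 0 ≤ z i) :
    ∏ i, z i ≤ ((∑ i, z i) / d) ^ d := by
  have h := Real.geom_mean_le_arith_mean Finset.univ (fun _ => (1 : ℝ)) z (by simp)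
    (by simpa using hd) (by simpa using hz)
  simp at h
  have hp : 0 ≤ ∏ i, z i := Finset.prod_nonneg fun i _ => hz i
  calc ∏ i, z i = ((∏ i, z i) ^ ((d : ℝ)⁻¹)) ^ d := (Real.rpow_inv_natCast_pow hp (by omega)).symm
    _ ≤ _ := by gcongr

/-- **Positive lower bound for all higher-order half-axis integrals.**
For `d ≥ 2`, `m ≥ 1`, positive reals `x₁, …, x_d` with `e₁ = Σ xᵢ`,
`q(τ) = ∏ (τ + xᵢ)`, and any `2 ≤ K ≤ md`:
`∫₀^∞ τ^{md−K}/q(τ)^m dτ ≥ (d/e₁)^{K−1} (md−K)!(K−2)!/(md−1)! > 0`. -/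
theorem higher_derivative_lower_bound (d m K : ℕ) (hd : 2 ≤ d) (hm : 1 ≤ m)
    (hK2 : 2 ≤ K) (hKmd : K ≤ m * d)
    (x : Fin d → ℝ) (hx : ∀ i, 0 < x i) :
    0 < ((d : ℝ) / (∑ i, x i)) ^ (K - 1) *
        ((m * d - K).factorial : ℝ) * ((K - 2).factorial : ℝ) / ((m * d - 1).factorial : ℝ) ∧
    ((d : ℝ) / (∑ i, x i)) ^ (K - 1) *
        ((m * d - K).factorial : ℝ) * ((K - 2).factorial : ℝ) / ((m * d - 1).factorial : ℝ) ≤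
      ∫ τ in Set.Ioi (0 : ℝ), τ ^ (m * d - K) / (∏ i, (τ + x i)) ^ m := by
  have hd0 : 0 < d := by omega
  haveI : Nonempty (Fin d) := ⟨⟨0, hd0⟩⟩
  have hdR : (0 : ℝ) < d := by exact_mod_cast hd0
  have hS : 0 < ∑ i, x i := Finset.sum_pos (fun i _ => hx i) Finset.univ_nonempty
  refine ⟨by positivity, ?_⟩
  obtain ⟨b, rfl⟩ : ∃ b, K = b + 2 := ⟨K - 2, by omega⟩
  obtain ⟨a, ha⟩ : ∃ a, m * d = a + b + 2 := ⟨m * d - (b + 2), by omega⟩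
  have e1 : m * d - (b + 2) = a := by omega
  have e2 : m * d - 1 = a + b + 1 := by omega
  rw [e1, e2]
  set s : ℝ := (∑ i, x i) / d with hs
  have hs0 : 0 < s := by positivity
  obtain ⟨j, hj⟩ := Finite.exists_min x
  have key : ∀ (t c : ℝ), ((t + c) ^ d) ^ m = (t + c) ^ (a + b + 2) := by
    intro t c
    rw [← pow_mul, mul_comm d m, ha]
  have hint : IntegrableOn (fun t : ℝ => t ^ a / (∏ i, (t + x i)) ^ m) (Set.Ioi 0) := by
    refine Integrable.mono' (aux_integrable (x j) (hx j) a b) ?_ ?_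
    · exact (by fun_prop : Measurable
        (fun t : ℝ => t ^ a / (∏ i, (t + x i)) ^ m)).aestronglyMeasurable
    · refine (ae_restrict_mem measurableSet_Ioi).mono ?_
      intro t ht
      have ht0 : (0 : ℝ) < t := ht
      have hxj := hx j
      have hq : 0 < ∏ i, (t + x i) := Finset.prod_pos fun i _ => by linarith [hx i]
      have hle : (t + x j) ^ d ≤ ∏ i, (t + x i) := by
        calc (t + x j) ^ d = ∏ _i : Fin d, (t + x j) := by simp
          _ ≤ _ := Finset.prod_le_prod (fun i _ => by linarith) (fun i _ => by linarith [hj i])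
      rw [Real.norm_of_nonneg (by positivity), ← key]
      gcongr
  have hv := aux_value s hs0 a b
  have hle : ∫ t in Set.Ioi (0 : ℝ), t ^ a / (t + s) ^ (a + b + 2) ≤
      ∫ t in Set.Ioi (0 : ℝ), t ^ a / (∏ i, (t + x i)) ^ m := by
    refine setIntegral_mono_on (aux_integrable s hs0 a b) hint measurableSet_Ioi ?_
    intro t ht
    have ht0 : (0 : ℝ) < t := ht
    have hq : 0 < ∏ i, (t + x i) := Finset.prod_pos fun i _ => by linarith [hx i]
    have hle : ∏ i, (t + x i) ≤ (t + s) ^ d := by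
      have h := aux_amgm d hd0 (fun i => t + x i) (fun i => by linarith [hx i])
      have e : (∑ i, (t + x i)) / d = t + s := by
        rw [Finset.sum_add_distrib, hs]
        simp
        field_simp
      rwa [e] at h
    rw [← key]
    gcongr
  rw [hv] at hle
  refine le_trans (le_of_eq ?_) hle
  have e3 : (d : ℝ) / (∑ i, x i) = s⁻¹ := by rw [hs, inv_div]
  rw [e3]
  simp only [Nat.add_sub_cancel, show b + 2 - 1 = b + 1 by omega, inv_pow]
  field_simp
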